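/- arXiv:2309.11229 — 2 statements merged into one kernel-verified Lean document; each statement's English description precedes it below -/
import Mathlib

section
/- Let n be an odd integer with n ≥ 7 and let f : F → 𝔽₂ be defined by f(x) = tr(x^{15}). For every a ∈ F with a ≠ 0, the number of b ∈ F \ {0, 1} such that the linear kernel E_{D_{ab} D_a f} has cardinality at most 8 is at least 3·2^{n−4} + 10. -/
noncomputable section

/-- `Fq n` is the finite field with `2 ^ n` elements. -/
abbrev Fq (n : ℕ) : Type := GaloisField 2 n

/-- The absolute trace map `tr x = x + x^2 + x^4 + ⋯ + x^(2^(n-1))` from `Fq n` to `𝔽₂`. -/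
def tr {n : ℕ} (x : Fq n) : ZMod 2 := Algebra.trace (ZMod 2) (Fq n) x

/-- The derivative of `f` with respect to `a`. -/
def der {n : ℕ} (f : Fq n → ZMod 2) (a : Fq n) : Fq n → ZMod 2 :=
  fun x => f x + f (x + a)

/-- Iterated derivatives along a list of directions (head applied last/outermost). -/
def derIter {n : ℕ} (f : Fq n → ZMod 2) : List (Fq n) → (Fq n → ZMod 2)
  | [] => f
  | a :: as => der (derIter f as) a

/-- `g` has algebraic degree at most `r`: all `(r+1)`-th order derivatives vanish. -/
def degLE {n : ℕ} (g : Fq n → ZMod 2) (r : ℕ) : Prop :=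
  ∀ l : List (Fq n), l.length = r + 1 → derIter g l = fun _ => 0

/-- Hamming distance between two Boolean functions on `Fq n`. -/
def hdist {n : ℕ} (f g : Fq n → ZMod 2) : ℕ :=
  {x : Fq n | f x ≠ g x}.ncard

/-- The `r`-th order nonlinearity of `f`. -/
def nl {n : ℕ} (r : ℕ) (f : Fq n → ZMod 2) : ℕ :=
  sInf {d : ℕ | ∃ g : Fq n → ZMod 2, degLE g r ∧ d = hdist f g}

/-- The linear kernel of `f`: directions along which the derivative is constant. -/
def linKer {n : ℕ} (f : Fq n → ZMod 2) : Set (Fq n) :=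
  {b | ∃ c : ZMod 2, ∀ x, der f b x = c}

/-- The weight of a Boolean function on `Fq n`. -/
def wt {n : ℕ} (f : Fq n → ZMod 2) : ℕ := {x : Fq n | f x = 1}.ncard


section Basic

lemma tr_add {n : ℕ} (x y : Fq n) : tr (x + y) = tr x + tr y := by
  simp [tr]

lemma tr_zero {n : ℕ} : tr (0 : Fq n) = 0 := by simp [tr]

lemma fq_card {n : ℕ} (hn : n ≠ 0) : Nat.card (Fq n) = 2 ^ n := GaloisField.card 2 n hn

noncomputable instance fqFintype {n : ℕ} : Fintype (Fq n) := Fintype.ofFinite _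

lemma fq_fcard {n : ℕ} (hn : n ≠ 0) : Fintype.card (Fq n) = 2 ^ n := by
  rw [← Nat.card_eq_fintype_card]; exact fq_card hn

lemma tr_sq {n : ℕ} (x : Fq n) : tr (x ^ 2) = tr x := by
  have h := Algebra.trace_eq_of_algEquiv (FiniteField.frobeniusAlgEquivOfAlgebraic (ZMod 2) (Fq n)) x
  simpa [tr] using h

lemma tr_nondeg {n : ℕ} (w : Fq n) (h : ∀ y, tr (w * y) = 0) : w = 0 := by
  have := (traceForm_nondegenerate (ZMod 2) (Fq n)).1 w
  apply this
  intro y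
  simpa [tr, Algebra.traceForm_apply] using h y

lemma tr_one {n : ℕ} (hn : n ≠ 0) (hodd : Odd n) : tr (1 : Fq n) = 1 := by
  have h := Algebra.trace_algebraMap (R := ZMod 2) (S := Fq n) 1
  rw [GaloisField.finrank 2 hn] at h
  simp only [map_one] at h
  rw [tr, h]
  obtain ⟨k, rfl⟩ := hodd
  have h2 : (2 : ZMod 2) = 0 := rfl
  simp [h2]

lemma zmod2_cases (x : ZMod 2) : x = 0 ∨ x = 1 := by
  revert x; decide

lemma fq_two {n : ℕ} : (2 : Fq n) = 0 := CharTwo.two_eq_zero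

lemma cube_inj {n : ℕ} (hn : n ≠ 0) (hodd : Odd n) {x y : Fq n} (h : x ^ 3 = y ^ 3) : x = y := by
  by_cases hy : y = 0
  · subst hy; simpa using h
  have hx : (x / y) ^ 3 = 1 := by rw [div_pow, h]; exact div_self (pow_ne_zero _ hy)
  have hxy0 : x / y ≠ 0 := by
    intro h0; rw [h0] at hx; norm_num at hx
  have h1 : (x / y) ^ (2 ^ n - 1) = 1 := by
    rw [← fq_fcard hn]; exact FiniteField.pow_card_sub_one_eq_one _ hxy0
  have hd : orderOf (x / y) ∣ Nat.gcd 3 (2 ^ n - 1) :=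
    Nat.dvd_gcd (orderOf_dvd_of_pow_eq_one hx) (orderOf_dvd_of_pow_eq_one h1)
  have hg : Nat.gcd 3 (2 ^ n - 1) = 1 := by
    rw [← Nat.coprime_iff_gcd_eq_one, Nat.Prime.coprime_iff_not_dvd Nat.prime_three]
    obtain ⟨k, rfl⟩ := hodd
    have : 2 ^ (2 * k + 1) % 3 = 2 := by
      rw [pow_succ, pow_mul, Nat.mul_mod, Nat.pow_mod]; norm_num
    have h1 : 1 ≤ 2 ^ (2 * k + 1) := Nat.one_le_two_pow
    generalize 2 ^ (2 * k + 1) = m at *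
    intro h3
    omega
  rw [hg, Nat.dvd_one, orderOf_eq_one_iff] at hd
  field_simp at hd
  exact hd

lemma cube_surj {n : ℕ} (hn : n ≠ 0) (hodd : Odd n) (y : Fq n) : ∃ x : Fq n, x ^ 3 = y :=
  (Finite.injective_iff_surjective.1
    (fun _ _ h => cube_inj hn hodd h : Function.Injective (fun x : Fq n => x ^ 3))) y

lemma sq_inj {n : ℕ} {x y : Fq n} (h : x ^ 2 = y ^ 2) : x = y := by
  have : (x + y) ^ 2 = 0 := by rw [CharTwo.add_sq, h, CharTwo.add_self_eq_zero]
  have := pow_eq_zero_iff (two_ne_zero) |>.1 this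
  exact CharTwo.add_eq_zero.1 this

lemma sq_surj {n : ℕ} (y : Fq n) : ∃ x : Fq n, x ^ 2 = y :=
  (Finite.injective_iff_surjective.1
    (fun _ _ h => sq_inj h : Function.Injective (fun x : Fq n => x ^ 2))) y

/-- Additive Hilbert 90. -/
lemma exists_as {n : ℕ} (y : Fq n) (hy : tr y = 0) : ∃ b : Fq n, b ^ 2 + b = y := by
  classical
  let φ : Fq n →ₗ[ZMod 2] Fq n :=
    (FiniteField.frobeniusAlgHom (ZMod 2) (Fq n)).toLinearMap + LinearMap.id
  have hφ : ∀ x, φ x = x ^ 2 + x := by intro x; simp [φ]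
  by_contra hno
  have hnr : y ∉ LinearMap.range φ := by
    rintro ⟨b, hb⟩; exact hno ⟨b, by rw [← hφ, hb]⟩
  obtain ⟨f, hf1, hf2⟩ := Submodule.exists_le_ker_of_notMem hnr
  obtain ⟨w, hw⟩ := (LinearMap.BilinForm.toDual (Algebra.traceForm (ZMod 2) (Fq n))
    (traceForm_nondegenerate _ _)).surjective f
  have hw' : ∀ x, f x = tr (w * x) := by
    intro x; rw [← hw]; simp [LinearMap.BilinForm.toDual_def, Algebra.traceForm_apply, tr]
  have h1 : w ^ 2 + w = 0 := by
    apply tr_nondeg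
    intro z
    obtain ⟨x, rfl⟩ := sq_surj z
    have : f (φ x) = 0 := hf2 ⟨x, rfl⟩
    rw [hw', hφ, mul_add, tr_add, ← tr_sq (w * x), mul_pow, ← tr_add] at this
    rw [← this]; congr 1; ring
  have h2 : w = 0 ∨ w = 1 := by
    have : w * (w + 1) = 0 := by rw [← h1]; ring
    rcases mul_eq_zero.1 this with h | h
    · exact Or.inl h
    · exact Or.inr (CharTwo.add_eq_zero.1 h)
  rcases h2 with h | h
  · apply hf1; rw [hw', h]; simp [tr_zero]
  · apply hf1; rw [hw', h, one_mul, hy]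

end Basic

section Kernel

lemma perm_identity {F : Type*} [Field F] [CharP F 2] (b x y : F) :
    1 + b ^ 15 + (1 + b) ^ 15 + x ^ 15 + (1 + x) ^ 15 + (b + x) ^ 15 + (1 + b + x) ^ 15 +
      (y ^ 15 + (1 + y) ^ 15 + (b + y) ^ 15 + (1 + b + y) ^ 15 + (x + y) ^ 15 + (1 + x + y) ^ 15 +
        (b + x + y) ^ 15 + (1 + b + x + y) ^ 15) =
    (b ^ 2 + b) * ((x ^ 2 + x) ^ 2 * (y ^ 2 + y) ^ 4 + (x ^ 2 + x) ^ 4 * (y ^ 2 + y) ^ 2) +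
    (b ^ 2 + b) ^ 2 * ((x ^ 2 + x) * (y ^ 2 + y) ^ 4 + (x ^ 2 + x) ^ 4 * (y ^ 2 + y)) +
    (b ^ 2 + b) ^ 4 * ((x ^ 2 + x) * (y ^ 2 + y) ^ 2 + (x ^ 2 + x) ^ 2 * (y ^ 2 + y)) := by
  have hq : ∀ s t : F, (s + t) ^ 4 = s ^ 4 + t ^ 4 := by
    intro s t
    rw [show 4 = 2 * 2 by rfl, pow_mul, CharTwo.add_sq, CharTwo.add_sq]; ring
  have he : ∀ s t : F, (s + t) ^ 8 = s ^ 8 + t ^ 8 := by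
    intro s t
    rw [show 8 = 4 * 2 by rfl, pow_mul, hq, CharTwo.add_sq]; ring
  have h15 : ∀ s : F, s ^ 15 = s * s ^ 2 * s ^ 4 * s ^ 8 := by intro s; ring
  have hs2 : ∀ s : F, (s ^ 2) ^ 2 = s ^ 4 := by intro s; ring
  have hs4 : ∀ s : F, (s ^ 2) ^ 4 = s ^ 8 := by intro s; ring
  simp only [h15, CharTwo.add_sq, hq, he, one_pow, hs2, hs4]
  generalize b ^ 2 = b2
  generalize b ^ 4 = b4
  generalize b ^ 8 = b8
  generalize x ^ 2 = x2
  generalize x ^ 4 = x4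
  generalize x ^ 8 = x8
  generalize y ^ 2 = y2
  generalize y ^ 4 = y4
  generalize y ^ 8 = y8
  -- signed polarization identity, valid over the integers
  have hp : 0 - (1)*(1)*(1)*(1) - (b)*(b2)*(b4)*(b8) + (1 + b)*(1 + b2)*(1 + b4)*(1 + b8) - (x)*(x2)*(x4)*(x8) + (1 + x)*(1 + x2)*(1 + x4)*(1 + x8) + (b + x)*(b2 + x2)*(b4 + x4)*(b8 + x8) - (1 + b + x)*(1 + b2 + x2)*(1 + b4 + x4)*(1 + b8 + x8) - (y)*(y2)*(y4)*(y8) + (1 + y)*(1 + y2)*(1 + y4)*(1 + y8) + (b + y)*(b2 + y2)*(b4 + y4)*(b8 + y8) - (1 + b + y)*(1 + b2 + y2)*(1 + b4 + y4)*(1 + b8 + y8) + (x + y)*(x2 + y2)*(x4 + y4)*(x8 + y8) - (1 + x + y)*(1 + x2 + y2)*(1 + x4 + y4)*(1 + x8 + y8) - (b + x + y)*(b2 + x2 + y2)*(b4 + x4 + y4)*(b8 + x8 + y8) + (1 + b + x + y)*(1 + b2 + x2 + y2)*(1 + b4 + x4 + y4)*(1 + b8 + x8 + y8) = 1*b2*x4*y8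 + 1*b2*x8*y4 + 1*b4*x2*y8 + 1*b4*x8*y2 + 1*b8*x2*y4 + 1*b8*x4*y2 + 1*b*x4*y8 + 1*b*x8*y4 + 1*b4*x*y8 + 1*b4*x8*y + 1*b8*x*y4 + 1*b8*x4*y + 1*b*x2*y8 + 1*b*x8*y2 + 1*b2*x*y8 + 1*b2*x8*y + 1*b8*x*y2 + 1*b8*x2*y + 1*b*x2*y4 + 1*b*x4*y2 + 1*b2*x*y4 + 1*b2*x4*y + 1*b4*x*y2 + 1*b4*x2*y := by ring
  -- the corresponding determinant expansion
  have hd : 0 + 1*b2*x4*y8 - 1*b2*x8*y4 - 1*b4*x2*y8 + 1*b4*x8*y2 + 1*b8*x2*y4 - 1*b8*x4*y2 - 1*b*x4*y8 + 1*b*x8*y4 + 1*b4*x*y8 - 1*b4*x8*y - 1*b8*x*y4 + 1*b8*x4*y + 1*b*x2*y8 - 1*b*x8*y2 - 1*b2*x*y8 + 1*b2*x8*y + 1*b8*x*y2 - 1*b8*x2*y - 1*b*x2*y4 + 1*b*x4*y2 + 1*b2*x*y4 - 1*b2*x4*y - 1*b4*x*y2 + 1*b4*x2*y = (b2 - b)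 * ((x4 - x2) * (y8 - y4) - (x8 - x4) * (y4 - y2))
      - (b4 - b2) * ((x2 - x) * (y8 - y4) - (x8 - x4) * (y2 - y))
      + (b8 - b4) * ((x2 - x) * (y4 - y2) - (x4 - x2) * (y2 - y)) := by ring
  simp only [CharTwo.sub_eq_add] at hp hd
  linear_combination hp + hd

lemma scale_identity {R : Type*} [CommRing R] (a b x y : R) :
    a ^ 15 * (1 + b ^ 15 + (1 + b) ^ 15 + x ^ 15 + (1 + x) ^ 15 + (b + x) ^ 15 + (1 + b + x) ^ 15 +
      (y ^ 15 + (1 + y) ^ 15 + (b + y) ^ 15 + (1 + b + y) ^ 15 + (x + y) ^ 15 + (1 + x + y) ^ 15 +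
        (b + x + y) ^ 15 + (1 + b + x + y) ^ 15)) =
    0 ^ 15 + (0 + a) ^ 15 + ((0 + a * b) ^ 15 + (0 + a * b + a) ^ 15) +
      ((0 + a * x) ^ 15 + (0 + a * x + a) ^ 15 +
        ((0 + a * x + a * b) ^ 15 + (0 + a * x + a * b + a) ^ 15)) +
    ((a * y) ^ 15 + (a * y + a) ^ 15 + ((a * y + a * b) ^ 15 + (a * y + a * b + a) ^ 15) +
      ((a * y + a * x) ^ 15 + (a * y + a * x + a) ^ 15 +
        ((a * y + a * x + a * b) ^ 15 + (a * y + a * x + a * b + a) ^ 15))) := by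
  have e0 : (0 : R) ^ 15 = 0 := by simp
  have h : ∀ s c : R, s = a * c → s ^ 15 = a ^ 15 * c ^ 15 := by
    intro s c hs; rw [hs, mul_pow]
  rw [e0, h (0 + a) 1 (by ring), h (0 + a * b) b (by ring), h (0 + a * b + a) (1 + b) (by ring),
    h (0 + a * x) x (by ring), h (0 + a * x + a) (1 + x) (by ring),
    h (0 + a * x + a * b) (b + x) (by ring), h (0 + a * x + a * b + a) (1 + b + x) (by ring),
    h (a * y) y rfl, h (a * y + a) (1 + y) (by ring), h (a * y + a * b) (b + y) (by ring),
    h (a * y + a * b + a) (1 + b + y) (by ring), h (a * y + a * x) (x + y) (by ring),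
    h (a * y + a * x + a) (1 + x + y) (by ring), h (a * y + a * x + a * b) (b + x + y) (by ring),
    h (a * y + a * x + a * b + a) (1 + b + x + y) (by ring), one_pow]
  simp only [mul_add]
  abel

lemma mem_ker_identity {n : ℕ} (f : Fq n → ZMod 2) (hf : ∀ x, f x = tr (x ^ 15))
    (a b x y : Fq n) (hx : a * x ∈ linKer (der (der f a) (a * b))) :
    tr (a ^ 15 * (
    (b ^ 2 + b) * ((x ^ 2 + x) ^ 2 * (y ^ 2 + y) ^ 4 + (x ^ 2 + x) ^ 4 * (y ^ 2 + y) ^ 2) +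
    (b ^ 2 + b) ^ 2 * ((x ^ 2 + x) * (y ^ 2 + y) ^ 4 + (x ^ 2 + x) ^ 4 * (y ^ 2 + y)) +
    (b ^ 2 + b) ^ 4 * ((x ^ 2 + x) * (y ^ 2 + y) ^ 2 + (x ^ 2 + x) ^ 2 * (y ^ 2 + y)))) = 0 := by
  rw [← perm_identity]
  obtain ⟨c, hc⟩ := hx
  have h0 := hc 0
  have hy := hc (a * y)
  have h : der (der (der f a) (a * b)) (a * x) 0 + der (der (der f a) (a * b)) (a * x) (a * y) = 0 := by
    rw [h0, hy, CharTwo.add_self_eq_zero]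
  rw [← h]
  rw [scale_identity]
  simp only [der, hf, ← tr_add]

/-- For `x` in the kernel, `L x` satisfies the adjoint equation. -/
lemma adj_lemma {n : ℕ} (b R : Fq n) (hβ : b ^ 2 + b ≠ 0)
    (h : ∀ y : Fq n, tr (R * (((y ^ 2 + y) / (b ^ 2 + b)) ^ 2 + (y ^ 2 + y) / (b ^ 2 + b))) = 0) :
    R = 0 ∨ R = 1 ∨ R = b ^ 2 ∨ R = b ^ 2 + 1 := by
  obtain ⟨σ, hσ⟩ := sq_surj (R + R ^ 2)
  have h1 : ∀ y : Fq n, tr (σ * ((y ^ 2 + y) / (b ^ 2 + b))) = 0 := by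
    intro y
    rw [← tr_sq, mul_pow, hσ, add_mul, tr_add, ← mul_pow, tr_sq, ← tr_add, ← h y]
    congr 1; ring
  have h2 : σ / (b ^ 2 + b) + (σ / (b ^ 2 + b)) ^ 2 = 0 := by
    apply tr_nondeg
    intro z
    obtain ⟨y, rfl⟩ := sq_surj z
    rw [add_mul, tr_add, ← mul_pow, tr_sq, ← tr_add, ← h1 y]
    congr 1; ring
  have key : ∀ t : Fq n, t + t ^ 2 = 0 → t = 0 ∨ t = 1 := by
    intro t ht
    have : t * (t + 1) = 0 := by rw [← ht]; ring
    rcases mul_eq_zero.1 this with h | h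
    · exact Or.inl h
    · exact Or.inr (CharTwo.add_eq_zero.1 h)
  rcases key _ h2 with h3 | h3
  · have : σ = 0 := by
      rcases div_eq_zero_iff.1 h3 with h | h
      · exact h
      · exact absurd h hβ
    rw [this] at hσ
    rcases key R (by rw [← hσ]; ring) with h | h <;> simp [h]
  · have : σ = b ^ 2 + b := by rwa [div_eq_one_iff_eq hβ] at h3
    rw [this, CharTwo.add_sq] at hσ
    have h4 : (R + b ^ 2) + (R + b ^ 2) ^ 2 = 0 := by
      rw [CharTwo.add_sq]
      have h2 := fq_two (n := n)
      linear_combination (-1) * hσ + (b ^ 2 + (b ^ 2) ^ 2) * h2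
    rcases key _ h4 with h | h
    · right; right; left; exact CharTwo.add_eq_zero.1 h
    · right; right; right
      have h2 := fq_two (n := n)
      linear_combination h - b ^ 2 * h2

lemma ker_cases {n : ℕ} (b x : Fq n) (hβ : b ^ 2 + b ≠ 0)
    (h : ((x ^ 2 + x) / (b ^ 2 + b)) ^ 2 + (x ^ 2 + x) / (b ^ 2 + b) = 0) :
    x = 0 ∨ x = 1 ∨ x = b ∨ x = b + 1 := by
  have key : ∀ t : Fq n, t ^ 2 + t = 0 → t = 0 ∨ t = 1 := by
    intro t ht
    have : t * (t + 1) = 0 := by rw [← ht]; ring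
    rcases mul_eq_zero.1 this with h | h
    · exact Or.inl h
    · exact Or.inr (CharTwo.add_eq_zero.1 h)
  have h2 := fq_two (n := n)
  rcases key _ h with h3 | h3
  · rcases div_eq_zero_iff.1 h3 with h | h
    · rcases key _ h with h | h <;> simp [h]
    · exact absurd h hβ
  · rw [div_eq_one_iff_eq hβ] at h3
    have h4 : (x + b) ^ 2 + (x + b) = 0 := by
      rw [CharTwo.add_sq]; linear_combination h3 + (b ^ 2 + b) * h2
    rcases key _ h4 with h | h
    · right; right; left; exact CharTwo.add_eq_zero.1 h
    · right; right; right; linear_combination h - b * h2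

lemma ker_small {n : ℕ} (hn : n ≠ 0) (hodd : Odd n)
    (f : Fq n → ZMod 2) (hf : ∀ x, f x = tr (x ^ 15))
    (a b c : Fq n) (ha : a ≠ 0) (hβ : b ^ 2 + b ≠ 0)
    (hc : c ^ 3 * (a ^ 15 * (b ^ 2 + b) ^ 7) = 1) (htc : tr c = 1) :
    (linKer (der (der f a) (a * b))).ncard ≤ 8 := by
  classical
  have h2 := fq_two (n := n)
  have hc0 : c ≠ 0 := by rintro rfl; simp at hc
  set β := b ^ 2 + b with hβdef
  let K : Fq n → Fq n := fun x => (x ^ 2 + x) / β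
  let U : Fq n → Fq n := fun x => K x ^ 2 + K x
  have hUadd : ∀ x y, U (x + y) = U x + U y := by
    intro x y
    simp only [U, K, CharTwo.add_sq, add_div, div_pow]
    ring
  have hKβ : ∀ x, x ^ 2 + x = β * K x := by intro x; simp only [K]; field_simp
  have htU : ∀ x, tr (U x) = 0 := by
    intro x; simp only [U, tr_add, tr_sq]; exact CharTwo.add_self_eq_zero _
  choose rt hrt using sq_surj (n := n)
  let R : Fq n → Fq n := fun x => rt ((U x / c + (U x / c) ^ 4) / c ^ 2)
  have hR : ∀ x, (c * R x) ^ 2 = U x / c + (U x / c) ^ 4 := by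
    intro x; simp only [R, mul_pow, hrt]; field_simp
  have htR : ∀ x, tr (c * R x) = 0 := by
    intro x
    rw [← tr_sq, hR, tr_add, show (U x / c) ^ 4 = ((U x / c) ^ 2) ^ 2 by ring, tr_sq, tr_sq]
    exact CharTwo.add_self_eq_zero _
  have hRmem : ∀ x, a * x ∈ linKer (der (der f a) (a * b)) →
      R x = 0 ∨ R x = 1 ∨ R x = b ^ 2 ∨ R x = b ^ 2 + 1 := by
    intro x hx
    apply adj_lemma b (R x) hβ
    intro y
    change tr (R x * U y) = 0
    have h := mem_ker_identity f hf a b x y hx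
    rw [← hβdef, hKβ x, hKβ y] at h
    have e : a ^ 15 * (β * ((β * K x) ^ 2 * (β * K y) ^ 4 + (β * K x) ^ 4 * (β * K y) ^ 2) +
        β ^ 2 * (β * K x * (β * K y) ^ 4 + (β * K x) ^ 4 * (β * K y)) +
        β ^ 4 * (β * K x * (β * K y) ^ 2 + (β * K x) ^ 2 * (β * K y))) =
        U x * U y ^ 2 / c ^ 3 + U x ^ 2 * U y / c ^ 3 := by
      have hc' : a ^ 15 * β ^ 7 = 1 / c ^ 3 := by field_simp; linear_combination hc
      simp only [U, CharTwo.add_sq]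
      linear_combination (K x ^ 2 * K y ^ 4 + K x ^ 4 * K y ^ 2 + K x * K y ^ 4 + K x ^ 4 * K y +
        K x * K y ^ 2 + K x ^ 2 * K y) * hc' - (K x ^ 2 * K y ^ 2 / c ^ 3) * h2
    rw [e, tr_add, ← tr_sq (U x ^ 2 * U y / c ^ 3), ← tr_add] at h
    rw [← tr_sq, ← h]
    congr 1
    have h3 := hR x
    have h4 : R x ^ 2 = (U x / c + (U x / c) ^ 4) / c ^ 2 := by
      rw [← h3]; field_simp
    rw [mul_pow, h4]
    field_simp
  -- `R` determines `U`
  have hRU : ∀ x y, R x = R y → U x = U y := by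
    intro x y hxy
    have h3 := hR x
    rw [hxy, hR y] at h3
    set z := (U x + U y) / c with hz
    have h4 : z + z ^ 4 = 0 := by
      have : z = U x / c + U y / c := by rw [hz]; ring
      rw [this, show (U x / c + U y / c) ^ 4 = ((U x / c + U y / c) ^ 2) ^ 2 by ring,
        CharTwo.add_sq, CharTwo.add_sq]
      linear_combination (-1) * h3 + (U y / c + (U y / c) ^ 4) * h2
    have h5 : z = 0 ∨ z = 1 := by
      have : z * (1 + z ^ 3) = 0 := by rw [← h4]; ring
      rcases mul_eq_zero.1 this with h | h
      · exact Or.inl h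
      · right
        apply cube_inj hn hodd
        rw [one_pow]; exact (CharTwo.add_eq_zero.1 h).symm
    rcases h5 with h | h
    · rw [hz, div_eq_zero_iff] at h
      rcases h with h | h
      · exact CharTwo.add_eq_zero.1 h
      · exact absurd h hc0
    · rw [hz, div_eq_one_iff_eq hc0] at h
      rw [← h, tr_add, htU, htU] at htc
      simp at htc
  -- the two possible values of `R`
  obtain ⟨r, hr⟩ : ∃ r : Fq n, ∀ x, a * x ∈ linKer (der (der f a) (a * b)) → R x = 0 ∨ R x = r := by
    rcases zmod2_cases (tr (c * b ^ 2)) with h | h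
    · refine ⟨b ^ 2, fun x hx => ?_⟩
      have ht := htR x
      rcases hRmem x hx with h1 | h1 | h1 | h1
      · exact Or.inl h1
      · rw [h1, mul_one, htc] at ht; simp at ht
      · exact Or.inr h1
      · rw [h1, mul_add, tr_add, h, mul_one, htc] at ht; simp at ht
    · refine ⟨b ^ 2 + 1, fun x hx => ?_⟩
      have ht := htR x
      rcases hRmem x hx with h1 | h1 | h1 | h1
      · exact Or.inl h1
      · rw [h1, mul_one, htc] at ht; simp at ht
      · rw [h1, h] at ht; simp at ht
      · exact Or.inr h1
  let E : Finset (Fq n) := (linKer (der (der f a) (a * b))).toFinite.toFinset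
  have hE : ∀ w, w ∈ E ↔ w ∈ linKer (der (der f a) (a * b)) := by intro w; simp [E]
  rw [Set.ncard_eq_toFinset_card _ (Set.toFinite _)]
  change E.card ≤ 8
  have hcard := Finset.card_le_mul_card_image (f := fun w => R (w / a)) E 4 (by
    intro r' hr'
    obtain ⟨w0, hw0, rfl⟩ := Finset.mem_image.1 hr'
    calc _ ≤ (Finset.image (fun t => w0 + a * t) {0, 1, b, b + 1}).card := by
          apply Finset.card_le_card
          intro w hw
          rw [Finset.mem_filter] at hw
          have h3 := hRU _ _ hw.2
          have h4 : U (w / a + w0 / a) = 0 := by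
            rw [hUadd, h3, CharTwo.add_self_eq_zero]
          have h5 := ker_cases b (w / a + w0 / a) hβ h4
          rw [Finset.mem_image]
          refine ⟨w / a + w0 / a, by simpa using h5, ?_⟩
          field_simp
          linear_combination w0 * h2
      _ ≤ Finset.card {0, 1, b, b + 1} := Finset.card_image_le
      _ ≤ 4 := Finset.card_le_four)
  have him : (Finset.image (fun w => R (w / a)) E).card ≤ 2 := by
    refine (Finset.card_le_card (t := {0, r}) ?_).trans Finset.card_le_two
    intro r' hr'
    obtain ⟨w0, hw0, rfl⟩ := Finset.mem_image.1 hr'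
    have := hr (w0 / a) (by rw [mul_div_cancel₀ _ ha]; exact (hE _).1 hw0)
    simpa using this
  omega

end Kernel

section Count

noncomputable instance fqDecEq {n : ℕ} : DecidableEq (Fq n) := Classical.decEq _

open Classical in
/-- The parameters `u` giving rise to good `b`. -/
def goodSet {n : ℕ} (κ : Fq n) : Finset (Fq n) :=
  Finset.univ.filter (fun u => u ≠ 0 ∧ tr (u ^ 3) = 0 ∧ tr (κ * (u ^ 7)⁻¹) = 1)

lemma count_ge {n : ℕ} (hn : n ≠ 0) (hodd : Odd n)
    (f : Fq n → ZMod 2) (hf : ∀ x, f x = tr (x ^ 15)) (a : Fq n) (ha : a ≠ 0) :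
    2 * (goodSet ((a ^ 5)⁻¹)).card ≤ {b : Fq n | b ≠ 0 ∧ b ≠ 1 ∧
        (linKer (der (der f a) (a * b))).ncard ≤ 8}.ncard := by
  classical
  have h2 := fq_two (n := n)
  rw [Set.ncard_eq_toFinset_card _ (Set.toFinite _)]
  have hex : ∀ u : Fq n, ∃ b : Fq n, tr (u ^ 3) = 0 → b ^ 2 + b = u ^ 3 := by
    intro u
    by_cases h : tr (u ^ 3) = 0
    · obtain ⟨b, hb⟩ := exists_as _ h
      exact ⟨b, fun _ => hb⟩
    · exact ⟨0, fun h' => absurd h' h⟩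
  choose β hβ using hex
  have hcard : (goodSet ((a ^ 5)⁻¹) ×ˢ ({0, 1} : Finset (Fq n))).card =
      2 * (goodSet ((a ^ 5)⁻¹)).card := by
    rw [Finset.card_product, Finset.card_pair zero_ne_one, mul_comm]
  rw [← hcard]
  have hb : ∀ u e : Fq n, tr (u ^ 3) = 0 → (e = 0 ∨ e = 1) → (β u + e) ^ 2 + (β u + e) = u ^ 3 := by
    intro u e hu he
    rw [← hβ u hu, CharTwo.add_sq]
    rcases he with rfl | rfl
    · ring
    · linear_combination h2
  apply Finset.card_le_card_of_injOn (fun p => β p.1 + p.2)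
  · rintro ⟨u, e⟩ hp
    simp only [Finset.coe_product, Set.mem_prod, Finset.mem_coe, goodSet, Finset.mem_filter,
      Finset.mem_univ, true_and, Finset.mem_insert, Finset.mem_singleton] at hp
    obtain ⟨⟨hu0, hu1, hu2⟩, he⟩ := hp
    have hbe := hb u e hu1 he
    have hne : (β u + e) ^ 2 + (β u + e) ≠ 0 := by rw [hbe]; exact pow_ne_zero _ hu0
    simp only [Set.Finite.coe_toFinset, Set.mem_ofPred_eq]
    refine ⟨?_, ?_, ?_⟩
    · intro h; apply hne; rw [h]; ring
    · intro h; apply hne; rw [h]; linear_combination h2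
    · refine ker_small hn hodd f hf a (β u + e) ((a ^ 5)⁻¹ * (u ^ 7)⁻¹) ha hne ?_ hu2
      rw [hbe]; field_simp
  · rintro ⟨u, e⟩ hp ⟨u', e'⟩ hp' heq
    simp only [Finset.coe_product, Set.mem_prod, Finset.mem_coe, goodSet, Finset.mem_filter,
      Finset.mem_univ, true_and, Finset.mem_insert, Finset.mem_singleton] at hp hp'
    simp only at heq
    have h3 := hb u e hp.1.2.1 hp.2
    have h4 := hb u' e' hp'.1.2.1 hp'.2
    rw [heq, h4] at h3
    have h5 := cube_inj hn hodd h3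
    subst h5
    have h6 := add_left_cancel heq
    rw [h6]

end Count

section Sums

/-- The sign character. -/
def sg (z : ZMod 2) : ℤ := if z = 0 then 1 else -1

lemma sg_add (z w : ZMod 2) : sg (z + w) = sg z * sg w := by
  revert z w; decide

lemma sg_zero : sg 0 = 1 := rfl

lemma sum_sg {n : ℕ} (t : Fq n) (ht : t ≠ 0) : ∑ κ : Fq n, sg (tr (κ * t)) = 0 := by
  obtain ⟨y, hy⟩ : ∃ y : Fq n, tr (t * y) ≠ 0 := by
    by_contra h; push Not at h; exact ht (tr_nondeg t h)
  have h1 : tr (y * t) = 1 := by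
    rw [mul_comm]; exact (zmod2_cases _).resolve_left hy
  have h := Equiv.sum_comp (Equiv.addRight y) (fun κ : Fq n => sg (tr (κ * t)))
  simp only [Equiv.coe_addRight, add_mul, tr_add, sg_add, h1] at h
  rw [← Finset.sum_mul] at h
  have : sg 1 = -1 := rfl
  rw [this] at h
  linarith

lemma sum_sg' {n : ℕ} (t : Fq n) : ∑ κ : Fq n, sg (tr (κ * t)) =
    if t = 0 then (Fintype.card (Fq n) : ℤ) else 0 := by
  split_ifs with h
  · simp [h, tr_zero, sg_zero]
  · exact sum_sg t h

open Classical in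
lemma second_moment {n : ℕ} {ι : Type*} [Fintype ι] (p r : ι → Fq n) :
    ∑ κ : Fq n, ∑ μ : Fq n, (∑ i, sg (tr (κ * p i + μ * r i))) ^ 2 =
    (Fintype.card (Fq n) : ℤ) ^ 2 *
      (Finset.univ.filter (fun v : ι × ι => p v.1 = p v.2 ∧ r v.1 = r v.2)).card := by
  have h1 : ∀ κ μ : Fq n, (∑ i, sg (tr (κ * p i + μ * r i))) ^ 2 =
      ∑ v : ι × ι, sg (tr (κ * (p v.1 + p v.2))) * sg (tr (μ * (r v.1 + r v.2))) := by
    intro κ μ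
    rw [sq, Finset.sum_mul_sum, Fintype.sum_prod_type]
    refine Finset.sum_congr rfl fun i _ => Finset.sum_congr rfl fun j _ => ?_
    simp only [mul_add, tr_add, sg_add]; ring
  simp only [h1]
  rw [Finset.sum_congr rfl (fun κ _ => Finset.sum_comm), Finset.sum_comm]
  have h2 : ∀ v : ι × ι, ∑ κ : Fq n, ∑ μ : Fq n,
      sg (tr (κ * (p v.1 + p v.2))) * sg (tr (μ * (r v.1 + r v.2))) =
      if p v.1 = p v.2 ∧ r v.1 = r v.2 then (Fintype.card (Fq n) : ℤ) ^ 2 else 0 := by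
    intro v
    rw [← Finset.sum_mul_sum, sum_sg', sum_sg']
    simp only [CharTwo.add_eq_zero]
    by_cases ha : p v.1 = p v.2 <;> by_cases hb : r v.1 = r v.2 <;> simp [ha, hb, sq]
  simp only [h2]
  rw [← Finset.sum_filter, Finset.sum_const, nsmul_eq_mul, mul_comm]

open Classical in
lemma sum_fiber_le {α β : Type*} [Fintype α] [Fintype β] (h : α → β) (g : β → ℤ)
    (hg : ∀ y, 0 ≤ g y) (m : ℕ) (hm : ∀ y, (Finset.univ.filter (fun t => h t = y)).card ≤ m) :
    ∑ t, g (h t) ≤ m * ∑ y, g y := by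
  rw [← Finset.sum_fiberwise Finset.univ h, Finset.mul_sum]
  refine Finset.sum_le_sum fun y _ => ?_
  rw [Finset.sum_congr rfl (g := fun _ => g y)
    (fun t ht => by rw [(Finset.mem_filter.1 ht).2]), Finset.sum_const, nsmul_eq_mul]
  exact mul_le_mul_of_nonneg_right (by exact_mod_cast hm y) (hg y)

/-- The exponential sum. -/
def SS {n : ℕ} (κ μ : Fq n) : ℤ :=
  ∑ u : (Fq n)ˣ, sg (tr (κ * ((u : Fq n) ^ 7)⁻¹ + μ * (u : Fq n) ^ 3))

lemma SS_scale {n : ℕ} (κ μ : Fq n) (t : (Fq n)ˣ) :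
    SS (κ * ((t : Fq n) ^ 7)⁻¹) (μ * (t : Fq n) ^ 3) = SS κ μ := by
  unfold SS
  rw [← Equiv.sum_comp (Equiv.mulRight t)
    (fun u : (Fq n)ˣ => sg (tr (κ * ((u : Fq n) ^ 7)⁻¹ + μ * (u : Fq n) ^ 3)))]
  refine Finset.sum_congr rfl fun u _ => ?_
  congr 2
  simp only [Equiv.coe_mulRight, Units.val_mul, mul_pow, mul_inv]
  ring

open Classical in
lemma pow7_fiber {n : ℕ} (y : Fq n) :
    (Finset.univ.filter (fun t : (Fq n)ˣ => (t : Fq n) ^ 7 = y)).card ≤ 7 := by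
  calc _ ≤ (Polynomial.nthRoots 7 y).toFinset.card := by
        apply Finset.card_le_card_of_injOn (fun t : (Fq n)ˣ => (t : Fq n))
        · intro t ht
          simpa [Polynomial.mem_nthRoots] using ht
        · intro a _ b _ h; exact Units.ext h
    _ ≤ (Polynomial.nthRoots 7 y).card := Multiset.toFinset_card_le _
    _ ≤ 7 := Polynomial.card_nthRoots 7 y

lemma fq_ucard {n : ℕ} (hn : n ≠ 0) : (Fintype.card (Fq n)ˣ : ℤ) = 2 ^ n - 1 := by
  rw [Fintype.card_units, fq_fcard hn, Nat.cast_sub Nat.one_le_two_pow]; push_cast; ring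

/-- The pure sum `Σ χ(κ u^{-7})` is at most `7√q`. -/
lemma S7_bound {n : ℕ} (hn : n ≠ 0) (κ : Fq n) (hκ : κ ≠ 0) :
    (SS κ 0) ^ 2 ≤ 49 * 2 ^ n := by
  classical
  have hQ := fq_ucard hn
  have hq : (Fintype.card (Fq n) : ℤ) = 2 ^ n := by rw [fq_fcard hn]; push_cast; rfl
  have hQpos : 0 < (Fintype.card (Fq n)ˣ : ℤ) := by exact_mod_cast Fintype.card_pos
  have hm := second_moment (n := n) (fun u : (Fq n)ˣ => ((u : Fq n) ^ 7)⁻¹) (fun _ => 0)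
  have hc : (Finset.univ.filter (fun v : (Fq n)ˣ × (Fq n)ˣ =>
      ((v.1 : Fq n) ^ 7)⁻¹ = ((v.2 : Fq n) ^ 7)⁻¹ ∧ True)).card ≤
      7 * Fintype.card (Fq n)ˣ := by
    refine (Finset.card_le_mul_card_image (f := Prod.snd) _ 7 ?_).trans
      (Nat.mul_le_mul_left _ (Finset.card_le_univ _))
    intro w _
    refine le_trans ?_ (pow7_fiber ((w : Fq n) ^ 7))
    apply Finset.card_le_card_of_injOn Prod.fst
    · rintro ⟨x, y⟩ h
      simp only [Finset.coe_filter, Finset.mem_filter, Finset.mem_univ, true_and, and_true,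
        Set.mem_ofPred_eq, inv_inj] at h
      simp [h.1, h.2]
    · rintro ⟨x, y⟩ h ⟨x', y'⟩ h' he
      simp only [Finset.coe_filter, Finset.mem_filter, Finset.mem_univ, true_and, and_true,
        Set.mem_ofPred_eq, inv_inj] at h h' he
      rw [Prod.mk.injEq]; exact ⟨he, h.2.trans h'.2.symm⟩
  have hsum : ∑ κ' : Fq n, (SS κ' 0) ^ 2 ≤ 2 ^ n * (7 * Fintype.card (Fq n)ˣ) := by
    simp only [mul_zero] at hm
    rw [Finset.sum_congr rfl (fun κ' _ => Finset.sum_const _), ← Finset.smul_sum, Finset.card_univ,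
      nsmul_eq_mul, hq] at hm
    have hm' : ∑ κ' : Fq n, (SS κ' 0) ^ 2 = ∑ κ' : Fq n,
      (∑ u : (Fq n)ˣ, sg (tr (κ' * ((u : Fq n) ^ 7)⁻¹ + 0))) ^ 2 := by simp [SS]
    rw [hm']
    have h2 : (2 : ℤ) ^ n ≠ 0 := by positivity
    rw [sq, mul_assoc] at hm
    rw [mul_left_cancel₀ h2 hm]
    exact mul_le_mul_of_nonneg_left (by exact_mod_cast hc) (by positivity)
  have horb := sum_fiber_le (fun t : (Fq n)ˣ => κ * ((t : Fq n) ^ 7)⁻¹)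
    (fun κ' => (SS κ' 0) ^ 2) (fun _ => sq_nonneg _) 7 (by
      intro y
      refine le_trans (Finset.card_le_card ?_) (pow7_fiber (κ / y))
      intro t ht
      simp only [Finset.mem_filter, Finset.mem_univ, true_and] at ht ⊢
      rw [← ht]; field_simp)
  have hconst : ∀ t : (Fq n)ˣ, SS (κ * ((t : Fq n) ^ 7)⁻¹) 0 = SS κ 0 := by
    intro t
    have := SS_scale κ 0 t
    rwa [zero_mul] at this
  simp only [hconst, Finset.sum_const, nsmul_eq_mul, Finset.card_univ] at horb
  push_cast at horb
  nlinarith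

end Sums

section Fourth

open Polynomial in
/-- The polynomial whose roots contain all values of `x + y`. -/
lemma sigma_poly {n : ℕ} (A B : Fq n) (hA : A ≠ 0) :
    ∃ P : (Fq n)[X], P ≠ 0 ∧ P.natDegree ≤ 21 ∧ ∀ s : Fq n, P.eval s =
      s ^ 14 + A ^ 2 * s ^ 8 + A ^ 3 * s ^ 5 + B * (s ^ 3 + A) ^ 7 := by
  refine ⟨X ^ 14 + C (A ^ 2) * X ^ 8 + C (A ^ 3) * X ^ 5 + C B * (X ^ 3 + C A) ^ 7, ?_, ?_, ?_⟩
  · intro h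
    by_cases hB : B = 0
    · have h1 := congrArg (fun p => p.coeff 14) h
      simp [hB, coeff_X_pow, -map_pow, coeff_C_mul] at h1
    · have h1 := congrArg (fun p => p.eval 0) h
      simp [hB, hA] at h1
  · compute_degree
  · intro s; simp

lemma sigma_root {n : ℕ} (A B x y : Fq n) (hx : x ≠ 0) (hy : y ≠ 0)
    (h3 : x ^ 3 + y ^ 3 = A) (h7 : (x ^ 7)⁻¹ + (y ^ 7)⁻¹ = B) :
    (x + y) ^ 14 + A ^ 2 * (x + y) ^ 8 + A ^ 3 * (x + y) ^ 5 + B * ((x + y) ^ 3 + A) ^ 7 = 0 ∧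
    (x + y) * (x * y) = (x + y) ^ 3 + A := by
  have h2 := fq_two (n := n)
  have e1 : (x + y) * (x * y) = (x + y) ^ 3 + A := by
    rw [← h3]; linear_combination (-(x ^ 3 + y ^ 3 + x ^ 2 * y + x * y ^ 2)) * h2
  have e2 : x ^ 7 + y ^ 7 = B * (x * y) ^ 7 := by
    rw [← h7]; field_simp; ring
  have e3 : x ^ 7 + y ^ 7 = (x + y) ^ 7 + (x + y) ^ 5 * (x * y) + (x + y) * (x * y) ^ 3 := by
    have : x ^ 7 + y ^ 7 = (x + y) ^ 7 - 7 * (x + y) ^ 5 * (x * y) + 14 * (x + y) ^ 3 * (x * y) ^ 2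
      - 7 * (x + y) * (x * y) ^ 3 := by ring
    rw [this]
    linear_combination (-4 * (x + y) ^ 5 * (x * y) + 7 * (x + y) ^ 3 * (x * y) ^ 2
      - 4 * (x + y) * (x * y) ^ 3) * h2
  refine ⟨?_, e1⟩
  rw [e2] at e3
  generalize x + y = s at *
  generalize x * y = p at *
  rw [← e1]
  have hA : A = s * p + s ^ 3 := by linear_combination (-1) * e1 - s ^ 3 * h2
  rw [hA]
  linear_combination s ^ 7 * e3 + (s ^ 8 * p ^ 3 + 2 * s ^ 10 * p ^ 2 + 3 * s ^ 12 * p + 2 * s ^ 14) * h2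

open Classical in
lemma pair_count {n : ℕ} (hn : n ≠ 0) (hodd : Odd n) (z w : (Fq n)ˣ) (hzw : z ≠ w) :
    (Finset.univ.filter (fun v : (Fq n)ˣ × (Fq n)ˣ =>
      ((v.1 : Fq n) ^ 7)⁻¹ + ((v.2 : Fq n) ^ 7)⁻¹ = ((z : Fq n) ^ 7)⁻¹ + ((w : Fq n) ^ 7)⁻¹ ∧
      (v.1 : Fq n) ^ 3 + (v.2 : Fq n) ^ 3 = (z : Fq n) ^ 3 + (w : Fq n) ^ 3)).card ≤ 42 := by
  have hA : (z : Fq n) ^ 3 + (w : Fq n) ^ 3 ≠ 0 := by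
    intro h
    exact hzw (Units.ext (cube_inj hn hodd (CharTwo.add_eq_zero.1 h)))
  obtain ⟨P, hP0, hPd, hPe⟩ := sigma_poly _ (((z : Fq n) ^ 7)⁻¹ + ((w : Fq n) ^ 7)⁻¹) hA
  set A := (z : Fq n) ^ 3 + (w : Fq n) ^ 3
  set B := ((z : Fq n) ^ 7)⁻¹ + ((w : Fq n) ^ 7)⁻¹
  have h2 := fq_two (n := n)
  have hs0 : ∀ x y : Fq n, x ^ 3 + y ^ 3 = A → x + y ≠ 0 := by
    intro x y h h0
    apply hA
    rw [← h, CharTwo.add_eq_zero.1 h0, CharTwo.add_self_eq_zero]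
  have hc := Finset.card_le_mul_card_image (f := fun v : (Fq n)ˣ × (Fq n)ˣ => (v.1 : Fq n) + v.2)
    (Finset.univ.filter (fun v : (Fq n)ˣ × (Fq n)ˣ =>
      ((v.1 : Fq n) ^ 7)⁻¹ + ((v.2 : Fq n) ^ 7)⁻¹ = B ∧
      (v.1 : Fq n) ^ 3 + (v.2 : Fq n) ^ 3 = A)) 2 (by
    intro s hs
    obtain ⟨⟨x0, y0⟩, h0, rfl⟩ := Finset.mem_image.1 hs
    simp only [Finset.mem_filter, Finset.mem_univ, true_and] at h0
    refine (Finset.card_le_card (t := {(x0, y0), (y0, x0)}) ?_).trans Finset.card_le_two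
    rintro ⟨x, y⟩ h
    simp only [Finset.mem_filter, Finset.mem_univ, true_and] at h
    have r0 := (sigma_root A B x0 y0 x0.ne_zero y0.ne_zero h0.2 h0.1).2
    have r := (sigma_root A B x y x.ne_zero y.ne_zero h.1.2 h.1.1).2
    rw [h.2, ← r0] at r
    have hp := mul_left_cancel₀ (hs0 _ _ h0.2) r
    have hm : ((x : Fq n) + x0) * (x + y0) = 0 := by
      linear_combination (-1) * hp - (x : Fq n) * h.2 + ((x : Fq n) ^ 2 + x * y) * h2
        + 0 * h2
    have hxy := h.2
    rcases mul_eq_zero.1 hm with h5 | h5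
    · have h6 := CharTwo.add_eq_zero.1 h5
      rw [h6] at hxy
      have h7 := add_left_cancel hxy
      simp [Units.ext h6, Units.ext h7]
    · have h6 := CharTwo.add_eq_zero.1 h5
      rw [h6, add_comm (x0 : Fq n)] at hxy
      have h7 := add_left_cancel hxy
      simp [Units.ext h6, Units.ext h7])
  have him : (Finset.image (fun v : (Fq n)ˣ × (Fq n)ˣ => (v.1 : Fq n) + v.2)
    (Finset.univ.filter (fun v : (Fq n)ˣ × (Fq n)ˣ =>
      ((v.1 : Fq n) ^ 7)⁻¹ + ((v.2 : Fq n) ^ 7)⁻¹ = B ∧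
      (v.1 : Fq n) ^ 3 + (v.2 : Fq n) ^ 3 = A))).card ≤ 21 := by
    refine le_trans (Finset.card_le_card (t := P.roots.toFinset) ?_)
      ((Multiset.toFinset_card_le _).trans ((Polynomial.card_roots' P).trans hPd))
    intro s hs
    obtain ⟨⟨x, y⟩, h, rfl⟩ := Finset.mem_image.1 hs
    simp only [Finset.mem_filter, Finset.mem_univ, true_and] at h
    rw [Multiset.mem_toFinset, Polynomial.mem_roots hP0, Polynomial.IsRoot, hPe]
    exact (sigma_root A B x y x.ne_zero y.ne_zero h.2 h.1).1
  omega

open Classical in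
lemma quad_count {n : ℕ} (hn : n ≠ 0) (hodd : Odd n) :
    (Finset.univ.filter (fun v : ((Fq n)ˣ × (Fq n)ˣ) × ((Fq n)ˣ × (Fq n)ˣ) =>
      ((v.1.1 : Fq n) ^ 7)⁻¹ + ((v.1.2 : Fq n) ^ 7)⁻¹ =
        ((v.2.1 : Fq n) ^ 7)⁻¹ + ((v.2.2 : Fq n) ^ 7)⁻¹ ∧
      (v.1.1 : Fq n) ^ 3 + (v.1.2 : Fq n) ^ 3 =
        (v.2.1 : Fq n) ^ 3 + (v.2.2 : Fq n) ^ 3)).card ≤ 43 * (Fintype.card (Fq n)ˣ) ^ 2 := by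
  rw [Finset.card_eq_sum_card_fiberwise (f := Prod.snd) (t := Finset.univ) (by intro _ _; simp)]
  have hfib : ∀ p : (Fq n)ˣ × (Fq n)ˣ, (Finset.filter (fun v => v.2 = p)
      (Finset.univ.filter (fun v : ((Fq n)ˣ × (Fq n)ˣ) × ((Fq n)ˣ × (Fq n)ˣ) =>
      ((v.1.1 : Fq n) ^ 7)⁻¹ + ((v.1.2 : Fq n) ^ 7)⁻¹ =
        ((v.2.1 : Fq n) ^ 7)⁻¹ + ((v.2.2 : Fq n) ^ 7)⁻¹ ∧
      (v.1.1 : Fq n) ^ 3 + (v.1.2 : Fq n) ^ 3 =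
        (v.2.1 : Fq n) ^ 3 + (v.2.2 : Fq n) ^ 3))).card ≤
      (if p.1 = p.2 then Fintype.card (Fq n)ˣ else 0) + 42 := by
    rintro ⟨z, w⟩
    split_ifs with h
    · simp only at h
      subst h
      refine le_trans ?_ (Nat.le_add_right _ _)
      rw [← Finset.card_univ]
      apply Finset.card_le_card_of_injOn (fun v => v.1.1)
      · intro _ _; simp
      · rintro ⟨⟨x, y⟩, p⟩ h ⟨⟨x', y'⟩, p'⟩ h' he
        simp only [Finset.coe_filter, Finset.mem_filter, Finset.mem_univ, true_and,
          Set.mem_ofPred_eq] at h h' he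
        obtain ⟨⟨_, h3⟩, rfl⟩ := h
        obtain ⟨⟨_, h3'⟩, rfl⟩ := h'
        simp only at h3 h3'
        rw [CharTwo.add_self_eq_zero, CharTwo.add_eq_zero] at h3 h3'
        have e1 := Units.ext (cube_inj hn hodd h3)
        have e2 := Units.ext (cube_inj hn hodd h3')
        subst e1 e2 he
        rfl
    · rw [zero_add]
      refine le_trans ?_ (pair_count hn hodd z w h)
      apply Finset.card_le_card_of_injOn (fun v => v.1)
      · rintro ⟨⟨x, y⟩, p⟩ h
        simp only [Finset.coe_filter, Finset.mem_filter, Finset.mem_univ, true_and,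
          Set.mem_ofPred_eq] at h ⊢
        obtain ⟨h3, rfl⟩ := h
        exact h3
      · rintro ⟨p, p1⟩ h ⟨p', p1'⟩ h' he
        simp only [Finset.coe_filter, Finset.mem_filter, Finset.mem_univ, true_and,
          Set.mem_ofPred_eq] at h h' he
        rw [he, h.2, h'.2]
  refine (Finset.sum_le_sum fun p _ => hfib p).trans ?_
  rw [Finset.sum_add_distrib, Fintype.sum_prod_type]
  simp only [Finset.sum_ite_eq, Finset.mem_univ, if_true, Finset.sum_const, smul_eq_mul,
    Finset.card_univ, Fintype.card_prod]
  apply le_of_eq; ring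

/-- Kloosterman's bound. -/
lemma S_bound {n : ℕ} (hn : n ≠ 0) (hodd : Odd n) (κ : Fq n) :
    (SS κ 1) ^ 4 ≤ 43 * (2 ^ n) ^ 3 := by
  classical
  have hQ := fq_ucard hn
  have hq : (Fintype.card (Fq n) : ℤ) = 2 ^ n := by rw [fq_fcard hn]; push_cast; rfl
  have hQpos : 0 < (Fintype.card (Fq n)ˣ : ℤ) := by exact_mod_cast Fintype.card_pos
  have hm := second_moment (n := n)
    (fun v : (Fq n)ˣ × (Fq n)ˣ => ((v.1 : Fq n) ^ 7)⁻¹ + ((v.2 : Fq n) ^ 7)⁻¹)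
    (fun v => (v.1 : Fq n) ^ 3 + (v.2 : Fq n) ^ 3)
  have hsq : ∀ κ μ : Fq n, (SS κ μ) ^ 2 = ∑ v : (Fq n)ˣ × (Fq n)ˣ,
      sg (tr (κ * (((v.1 : Fq n) ^ 7)⁻¹ + ((v.2 : Fq n) ^ 7)⁻¹) +
        μ * ((v.1 : Fq n) ^ 3 + (v.2 : Fq n) ^ 3))) := by
    intro κ μ
    rw [SS, sq, Finset.sum_mul_sum, Fintype.sum_prod_type]
    refine Finset.sum_congr rfl fun i _ => Finset.sum_congr rfl fun j _ => ?_
    simp only [mul_add, tr_add, sg_add]; ring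
  simp only [← hsq] at hm
  have hle : ∑ κ' : Fq n, ∑ μ' : Fq n, ((SS κ' μ') ^ 2) ^ 2 ≤
      (2 ^ n) ^ 2 * (43 * (Fintype.card (Fq n)ˣ : ℤ) ^ 2) := by
    rw [hm, hq]
    refine mul_le_mul_of_nonneg_left ?_ (by positivity)
    exact_mod_cast quad_count hn hodd
  rw [← Fintype.sum_prod_type'] at hle
  have horb := sum_fiber_le
    (fun t : (Fq n)ˣ => ((κ * ((t : Fq n) ^ 7)⁻¹, 1 * (t : Fq n) ^ 3) : Fq n × Fq n))
    (fun p => ((SS p.1 p.2) ^ 2) ^ 2) (fun _ => sq_nonneg _) 1 (by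
      intro y
      rw [Finset.card_le_one]
      intro s hs t ht
      simp only [Finset.mem_filter, Finset.mem_univ, true_and] at hs ht
      have := hs.trans ht.symm
      rw [Prod.mk.injEq, one_mul, one_mul] at this
      exact Units.ext (cube_inj hn hodd this.2))
  simp only [SS_scale, Finset.sum_const, nsmul_eq_mul, Finset.card_univ] at horb
  push_cast at horb
  have h3 : (Fintype.card (Fq n)ˣ : ℤ) * (SS κ 1) ^ 4 ≤
      (Fintype.card (Fq n)ˣ : ℤ) * (43 * (2 ^ n) ^ 2 * (Fintype.card (Fq n)ˣ : ℤ)) := by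
    linarith [show ((SS κ 1) ^ 2) ^ 2 = (SS κ 1) ^ 4 by ring]
  have h4 := le_of_mul_le_mul_left h3 hQpos
  rw [hQ] at h4
  have : (0 : ℤ) < 2 ^ n := by positivity
  nlinarith

end Fourth

section Large

lemma unit_sum {n : ℕ} (g : Fq n → ℤ) : ∑ u : (Fq n)ˣ, g u = ∑ u : Fq n, g u - g 0 := by
  have h : ∑ u : (Fq n)ˣ, g u = ∑ u ∈ Finset.univ.erase (0 : Fq n), g u := by
    refine Finset.sum_bij (fun u _ => (u : Fq n)) ?_ ?_ ?_ ?_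
    · intro u _; simp
    · intro u _ v _ h; exact Units.ext h
    · intro b hb
      exact ⟨Units.mk0 b (Finset.ne_of_mem_erase hb), Finset.mem_univ _, rfl⟩
    · intro u _; rfl
  rw [h, Finset.sum_erase_eq_sub (Finset.mem_univ _)]

lemma ind_identity (A B : ZMod 2) :
    4 * (if A = 0 ∧ B = 1 then (1 : ℤ) else 0) = 1 + sg A - sg B - sg (B + A) := by
  revert A B; decide

lemma good_identity {n : ℕ} (hn : n ≠ 0) (hodd : Odd n) (κ : Fq n) :
    4 * ((goodSet κ).card : ℤ) = 2 ^ n - 2 - SS κ 0 - SS κ 1 := by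
  classical
  have h1 : ((goodSet κ).card : ℤ) = ∑ u : (Fq n)ˣ,
      if tr ((u : Fq n) ^ 3) = 0 ∧ tr (κ * ((u : Fq n) ^ 7)⁻¹) = 1 then (1 : ℤ) else 0 := by
    rw [unit_sum (fun u : Fq n =>
      if tr (u ^ 3) = 0 ∧ tr (κ * (u ^ 7)⁻¹) = 1 then (1 : ℤ) else 0)]
    rw [goodSet, Finset.card_filter]
    have h0 : ¬ (tr ((0 : Fq n) ^ 3) = 0 ∧ tr (κ * ((0 : Fq n) ^ 7)⁻¹) = 1) := by
      simp [tr_zero]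
    rw [if_neg h0, sub_zero]
    push_cast
    refine Finset.sum_congr rfl fun u _ => ?_
    by_cases hu : u = 0
    · subst hu; rw [if_neg h0, if_neg]; simp
    · simp [hu]
  have h2 : ∑ u : (Fq n)ˣ, sg (tr ((u : Fq n) ^ 3)) = -1 := by
    rw [unit_sum (fun u : Fq n => sg (tr (u ^ 3)))]
    have hb : Function.Bijective (fun x : Fq n => x ^ 3) :=
      ⟨fun _ _ h => cube_inj hn hodd h, cube_surj hn hodd⟩
    rw [hb.sum_comp (fun x => sg (tr x))]
    have := sum_sg (n := n) 1 one_ne_zero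
    simp only [mul_one] at this
    rw [this]
    simp [tr_zero, sg_zero]
  have hQ := fq_ucard hn
  rw [h1, Finset.mul_sum, Finset.sum_congr rfl fun u _ => ind_identity _ _]
  rw [Finset.sum_sub_distrib, Finset.sum_sub_distrib, Finset.sum_add_distrib, h2]
  simp only [Finset.sum_const, Finset.card_univ, nsmul_eq_mul, mul_one, hQ]
  unfold SS
  simp only [zero_mul, add_zero, one_mul, tr_add]
  ring

lemma numeric_bound (q x y : ℤ) (hq : 2048 ≤ q) (hx : x ^ 2 ≤ 49 * q) (hy : y ^ 4 ≤ 43 * q ^ 3) :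
    8 * (x + y) + 176 ≤ 5 * q := by
  have h1 : 200 * x ≤ 31 * q := by
    apply le_of_pow_le_pow_left₀ (n := 2) (by norm_num) (by linarith)
    nlinarith
  have h2 : 1000 * y ≤ 381 * q := by
    have h3 : 43 * q ^ 3 * 2048 ≤ 43 * q ^ 4 := by
      have : 0 ≤ q ^ 3 := by positivity
      nlinarith
    apply le_of_pow_le_pow_left₀ (n := 4) (by norm_num) (by linarith)
    have : 0 ≤ q ^ 4 := by positivity
    calc (1000 * y) ^ 4 = 1000 ^ 4 * y ^ 4 := by ring
      _ ≤ 381 ^ 4 * q ^ 4 := by linarith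
      _ = _ := by ring
  linarith

lemma good_large {n : ℕ} (hn : 11 ≤ n) (hodd : Odd n) (κ : Fq n) (hκ : κ ≠ 0) :
    3 * 2 ^ (n - 5) + 5 ≤ (goodSet κ).card := by
  have hn0 : n ≠ 0 := by omega
  have h1 := good_identity hn0 hodd κ
  have h2 := S7_bound hn0 κ hκ
  have h3 := S_bound hn0 hodd κ
  have hq : (2048 : ℤ) ≤ 2 ^ n := by
    calc (2048 : ℤ) = 2 ^ 11 := by norm_num
      _ ≤ _ := pow_le_pow_right₀ (by norm_num) hn
  have h4 := numeric_bound _ _ _ hq h2 h3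
  obtain ⟨m, rfl⟩ := Nat.exists_eq_add_of_le hn
  have e : 11 + m - 5 = 6 + m := by omega
  rw [e]
  rw [pow_add] at h1 h4 ⊢
  zify
  linarith

end Large

section Small

lemma exists_root_of_dvd {n : ℕ} (hn : n ≠ 0) (P : Polynomial (ZMod 2)) (hdeg : P.degree ≠ 0)
    (h : P ∣ Polynomial.X ^ (2 ^ n) - Polynomial.X) :
    ∃ g : Fq n, Polynomial.aeval g P = 0 := by
  have hs : (Polynomial.map (algebraMap (ZMod 2) (Fq n))
      (Polynomial.X ^ (2 ^ n) - Polynomial.X)).Splits := by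
    have := FiniteField.splits_X_pow_nat_card_sub_X (K := Fq n) 2
    rwa [fq_card hn] at this
  have h0 : (Polynomial.map (algebraMap (ZMod 2) (Fq n))
      (Polynomial.X ^ (2 ^ n) - Polynomial.X)) ≠ 0 := by
    rw [Polynomial.map_ne_zero_iff (algebraMap (ZMod 2) (Fq n)).injective]
    exact FiniteField.X_pow_card_pow_sub_X_ne_zero _ hn (by norm_num)
  have h1 := hs.of_dvd h0 (Polynomial.map_dvd (algebraMap (ZMod 2) (Fq n)) h)
  obtain ⟨g, hg⟩ := h1.exists_eval_eq_zero (by rwa [Polynomial.degree_map])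
  exact ⟨g, by rwa [Polynomial.eval_map_algebraMap] at hg⟩

open Polynomial in
lemma dvd7 : (X ^ 7 + X + 1 : (ZMod 2)[X]) ∣ X ^ (2 ^ 7) - X := by
  rw [← AdjoinRoot.mk_eq_zero]
  have hα : AdjoinRoot.mk (X ^ 7 + X + 1 : (ZMod 2)[X]) (X ^ 7 + X + 1) = 0 := AdjoinRoot.mk_self
  have h2 : (2 : AdjoinRoot (X ^ 7 + X + 1 : (ZMod 2)[X])) = 0 := by
    have := congrArg (AdjoinRoot.of (X ^ 7 + X + 1 : (ZMod 2)[X])) (CharTwo.two_eq_zero (R := ZMod 2))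
    simpa only [map_ofNat, map_zero] using this
  simp only [map_add, map_sub, map_pow, map_one] at hα ⊢
  generalize AdjoinRoot.mk (X ^ 7 + X + 1 : (ZMod 2)[X]) X = α at *
  replace hα : α ^ 7 - α - 1 = 0 := by linear_combination hα - (α + 1) * h2
  have h2' : α ^ 2 = α ^ 2 := rfl
  have h4 : α ^ 4 = α ^ 4 := by
    linear_combination (α ^ 2 + (α ^ 2)) * h2' + (0) * hα + (0) * h2
  have h8 : α ^ 8 = α ^ 2 + α ^ 1 := by
    linear_combination (α ^ 4 + (α ^ 4)) * h4 + (α ^ 1) * hα + (0) * h2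
  have h16 : α ^ 16 = α ^ 4 + α ^ 2 := by
    linear_combination (α ^ 8 + (α ^ 2 + α ^ 1)) * h8 + (0) * hα + (α ^ 3) * h2
  have h32 : α ^ 32 = α ^ 4 + α ^ 2 + α ^ 1 := by
    linear_combination (α ^ 16 + (α ^ 4 + α ^ 2)) * h16 + (α ^ 1) * hα + (α ^ 6) * h2
  have h64 : α ^ 64 = α ^ 4 + α ^ 1 := by
    linear_combination (α ^ 32 + (α ^ 4 + α ^ 2 + α ^ 1)) * h32 + (α ^ 1) * hα + (α ^ 6 + α ^ 5 + α ^ 3 + α ^ 2) * h2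
  have h128 : α ^ 128 = α ^ 1 := by
    linear_combination (α ^ 64 + (α ^ 4 + α ^ 1)) * h64 + (α ^ 1) * hα + (α ^ 5 + α ^ 2) * h2
  norm_num [h128]

open Polynomial in
lemma dvd9 : (X ^ 9 + X ^ 4 + 1 : (ZMod 2)[X]) ∣ X ^ (2 ^ 9) - X := by
  rw [← AdjoinRoot.mk_eq_zero]
  have hα : AdjoinRoot.mk (X ^ 9 + X ^ 4 + 1 : (ZMod 2)[X]) (X ^ 9 + X ^ 4 + 1) = 0 :=
    AdjoinRoot.mk_self
  have h2 : (2 : AdjoinRoot (X ^ 9 + X ^ 4 + 1 : (ZMod 2)[X])) = 0 := by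
    have := congrArg (AdjoinRoot.of (X ^ 9 + X ^ 4 + 1 : (ZMod 2)[X]))
      (CharTwo.two_eq_zero (R := ZMod 2))
    simpa only [map_ofNat, map_zero] using this
  simp only [map_add, map_sub, map_pow, map_one] at hα ⊢
  generalize AdjoinRoot.mk (X ^ 9 + X ^ 4 + 1 : (ZMod 2)[X]) X = α at *
  replace hα : α ^ 9 - α ^ 4 - 1 = 0 := by linear_combination hα - (α ^ 4 + 1) * h2
  have h2' : α ^ 2 = α ^ 2 := rfl
  have h4 : α ^ 4 = α ^ 4 := by
    linear_combination (α ^ 2 + (α ^ 2)) * h2' + (0) * hα + (0) * h2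
  have h8 : α ^ 8 = α ^ 8 := by
    linear_combination (α ^ 4 + (α ^ 4)) * h4 + (0) * hα + (0) * h2
  have h16 : α ^ 16 = α ^ 7 + α ^ 6 + α ^ 2 := by
    linear_combination (α ^ 8 + (α ^ 8)) * h8 + (α ^ 7 + α ^ 2) * hα + (0) * h2
  have h32 : α ^ 32 = α ^ 7 + α ^ 5 + α ^ 3 + 1 := by
    linear_combination (α ^ 16 + (α ^ 7 + α ^ 6 + α ^ 2)) * h16 + (α ^ 5 + (2) * α ^ 4 + α ^ 3 + (3) * 1) * hα + ((2) * α ^ 8 + (3) * α ^ 4 + 1) * h2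
  have h64 : α ^ 64 = α ^ 6 + α ^ 4 + α ^ 1 := by
    linear_combination (α ^ 32 + (α ^ 7 + α ^ 5 + α ^ 3 + 1)) * h32 + (α ^ 5 + (2) * α ^ 3 + (3) * α ^ 1 + 1) * hα + (α ^ 8 + (2) * α ^ 7 + (3) * α ^ 5 + (2) * α ^ 3 + α ^ 1 + 1) * h2
  have h128 : α ^ 128 = α ^ 8 + α ^ 7 + α ^ 3 + α ^ 2 := by
    linear_combination (α ^ 64 + (α ^ 6 + α ^ 4 + α ^ 1)) * h64 + (α ^ 3 + (2) * α ^ 1) * hα + (α ^ 7 + (2) * α ^ 5 + α ^ 1) * h2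
  have h256 : α ^ 256 = α ^ 7 + α ^ 5 + α ^ 2 + 1 := by
    linear_combination (α ^ 128 + (α ^ 8 + α ^ 7 + α ^ 3 + α ^ 2)) * h128 + (α ^ 7 + (2) * α ^ 6 + α ^ 5 + (3) * α ^ 2 + (6) * α ^ 1 + (3) * 1) * hα + ((3) * α ^ 6 + (4) * α ^ 5 + (2) * α ^ 4 + α ^ 2 + (3) * α ^ 1 + 1) * h2
  have h512 : α ^ 512 = α ^ 1 := by
    linear_combination (α ^ 256 + (α ^ 7 + α ^ 5 + α ^ 2 + 1)) * h256 + (α ^ 5 + (2) * α ^ 3 + α ^ 1 + (3) * 1) * hα + ((3) * α ^ 7 + (2) * α ^ 5 + (2) * α ^ 4 + α ^ 3 + α ^ 2 + (2) * 1) * h2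
  norm_num [h512]

/-- Bit `j` of `N`. -/
def sBit (N j : ℕ) : ℕ := Nat.land (Nat.shiftRight N j) 1

/-- Counting the exponents `i < T` of good `u = g ^ i`. -/
def sCount (N Q k T : ℕ) : ℕ :=
  Nat.rec 0 (fun i c => Nat.add
    (Nat.mul (Nat.sub 1 (sBit N (Nat.mod (Nat.mul 3 i) Q)))
      (sBit N (Nat.mod (Nat.add k (Nat.mul (Nat.sub Q 7) i)) Q))) c) T

/-- All counts are at least `m`. -/
def sAll (N Q m : ℕ) : ℕ → Bool
  | 0 => true
  | k + 1 => (Nat.ble m (sCount N Q k Q)) && sAll N Q m k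

/-- The trace sequence for `n = 7`. -/
def traceBits7 : ℕ := 168363426675789975674233829124643250305

/-- The trace sequence for `n = 9`. -/
def traceBits9 : ℕ := 13992193413405257156128966693974023892466315556652215890842446329444281716486722768730231234175080484204354046336331252701046483497526983992879892694561

set_option maxRecDepth 100000 in
lemma sAll7 : sAll traceBits7 127 17 127 = true := by decide +kernel

set_option maxRecDepth 100000 in
lemma sAll9 : sAll traceBits9 511 53 511 = true := by decide +kernel

lemma sAll_spec (N Q m : ℕ) : ∀ t, sAll N Q m t = true → ∀ k < t, m ≤ sCount N Q k Q := by
  intro t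
  induction t with
  | zero => intro _ k hk; omega
  | succ t ih =>
    intro h k hk
    simp only [sAll, Bool.and_eq_true] at h
    rcases Nat.lt_succ_iff_lt_or_eq.1 hk with h1 | rfl
    · exact ih h.2 k h1
    · exact Nat.le_of_ble_eq_true h.1

lemma sBit_cases (N j : ℕ) : sBit N j = 0 ∨ sBit N j = 1 := by
  have : sBit N j = (N >>> j) % 2 := Nat.and_one_is_mod _
  omega

/-- A linear recurrence determines the trace sequence. -/
lemma table_spec {n : ℕ} (N Q t : ℕ) (ht : t < n) (g : Fq n) (hg : g ^ n = g ^ t + 1)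
    (hinit : ∀ j < n, tr (g ^ j) = (sBit N j : ZMod 2))
    (hchk : ∀ j < Q - n, sBit N (j + n) % 2 = (sBit N (j + t) + sBit N j) % 2) :
    ∀ j < Q, tr (g ^ j) = (sBit N j : ZMod 2) := by
  intro j
  induction j using Nat.strong_induction_on with
  | _ j ih =>
    intro hj
    by_cases h : j < n
    · exact hinit j h
    · obtain ⟨i, rfl⟩ := Nat.exists_eq_add_of_le' (not_lt.1 h)
      have e : g ^ (i + n) = g ^ (i + t) + g ^ i := by rw [pow_add, hg]; ring
      rw [e, tr_add, ih _ (by omega) (by omega), ih i (by omega) (by omega)]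
      have := (ZMod.natCast_eq_natCast_iff' _ _ 2).2 (hchk i (by omega))
      rw [this]; push_cast; rfl

lemma small_case {n : ℕ} (hn : n ≠ 0) (N Q m : ℕ) (hQ : Q = 2 ^ n - 1) (hQ7 : 7 ≤ Q) (g : Fq n)
    (hord : orderOf g = Q) (htab : ∀ j < Q, tr (g ^ j) = (sBit N j : ZMod 2))
    (hall : sAll N Q m Q = true) (κ : Fq n) (hκ : κ ≠ 0) : m ≤ (goodSet κ).card := by
  classical
  have hgQ : g ^ Q = 1 := by rw [← hord]; exact pow_orderOf_eq_one g
  have hg0 : g ≠ 0 := by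
    rintro rfl
    rw [zero_pow (by omega)] at hgQ
    exact zero_ne_one hgQ
  have hmod : ∀ j, g ^ (j % Q) = g ^ j := by
    intro j; rw [← hord]; exact pow_mod_orderOf g j
  have htr : ∀ j, tr (g ^ j) = (sBit N (j % Q) : ZMod 2) := by
    intro j; rw [← hmod, htab _ (Nat.mod_lt _ (by omega))]
  have hinj : Set.InjOn (fun i : ℕ => g ^ i) (Finset.range Q) := by
    intro i hi j hj h
    refine pow_injOn_Iio_orderOf ?_ ?_ h
    · simpa [hord] using hi
    · simpa [hord] using hj
  obtain ⟨k, hk, rfl⟩ : ∃ k < Q, g ^ k = κ := by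
    have himg : (Finset.range Q).image (fun i => g ^ i) = Finset.univ.erase (0 : Fq n) := by
      apply Finset.eq_of_subset_of_card_le
      · intro x hx
        obtain ⟨i, _, rfl⟩ := Finset.mem_image.1 hx
        simp [hg0]
      · rw [Finset.card_image_of_injOn hinj, Finset.card_erase_of_mem (Finset.mem_univ _),
          Finset.card_univ, fq_fcard hn, Finset.card_range, hQ]
    have : κ ∈ (Finset.range Q).image (fun i => g ^ i) := by rw [himg]; simp [hκ]
    obtain ⟨k, hk, rfl⟩ := Finset.mem_image.1 this
    exact ⟨k, Finset.mem_range.1 hk, rfl⟩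
  refine (sAll_spec N Q m Q hall k hk).trans ?_
  have hexp : ∀ i, g ^ k * ((g ^ i) ^ 7)⁻¹ = g ^ (k + (Q - 7) * i) := by
    intro i
    rw [pow_add]
    congr 1
    apply inv_eq_of_mul_eq_one_right
    rw [← pow_mul, ← pow_add]
    have : i * 7 + (Q - 7) * i = Q * i := by
      obtain ⟨r, rfl⟩ := Nat.exists_eq_add_of_le hQ7
      rw [Nat.add_sub_cancel_left]; ring
    rw [this, pow_mul, hgQ, one_pow]
  have hcount : ∀ T, sCount N Q k T ≤ ((Finset.range T).filter (fun i =>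
      tr ((g ^ i) ^ 3) = 0 ∧ tr (g ^ k * ((g ^ i) ^ 7)⁻¹) = 1)).card := by
    intro T
    induction T with
    | zero => exact Nat.zero_le _
    | succ T ih =>
      have e : sCount N Q k (T + 1) = (1 - sBit N ((3 * T) % Q)) *
        sBit N ((k + (Q - 7) * T) % Q) + sCount N Q k T := rfl
      have e1 : tr ((g ^ T) ^ 3) = (sBit N ((3 * T) % Q) : ZMod 2) := by
        rw [← pow_mul, mul_comm T 3, htr]
      have e2 : tr (g ^ k * ((g ^ T) ^ 7)⁻¹) = (sBit N ((k + (Q - 7) * T) % Q) : ZMod 2) := by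
        rw [hexp, htr]
      rw [e, Finset.range_add_one, Finset.filter_insert, e1, e2]
      rcases sBit_cases N ((3 * T) % Q) with h1 | h1
      · rcases sBit_cases N ((k + (Q - 7) * T) % Q) with h2 | h2
        · rw [h1, h2]; simpa using ih
        · rw [h1, h2, if_pos (by simp), Finset.card_insert_of_notMem (by simp)]; omega
      · rw [h1]; simpa using ih
  refine (hcount Q).trans ?_
  apply Finset.card_le_card_of_injOn (fun i => g ^ i)
  · intro i hi
    have hi' := (Finset.mem_filter.1 hi).2
    simp only [goodSet, Finset.coe_filter, Finset.mem_univ, true_and, Set.mem_ofPred_eq]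
    exact ⟨pow_ne_zero _ hg0, hi'⟩
  · exact hinj.mono (by intro i hi; exact (Finset.mem_filter.1 hi).1)

lemma init7 (s : ℕ → ZMod 2) (hrec : ∀ j, s (j + 7) = s (j + 1) + s j)
    (hsq : ∀ j, s (2 * j) = s j) (t0 : s 0 = 1) :
    ∀ j < 7, s j = (sBit traceBits7 j : ZMod 2) := by
  have a1 : s 2 = s 1 := hsq 1
  have a2 : s 4 = s 2 := hsq 2
  have a3 : s 6 = s 3 := hsq 3
  have a4 : s 8 = s 4 := hsq 4
  have a5 : s 10 = s 5 := hsq 5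
  have a6 : s 12 = s 6 := hsq 6
  have b1 : s 8 = s 2 + s 1 := hrec 1
  have b3 : s 10 = s 4 + s 3 := hrec 3
  have b5 : s 12 = s 6 + s 5 := hrec 5
  have e1 : s 1 = 0 := by
    rw [← a1, ← a2, ← a4, b1, a1]; exact CharTwo.add_self_eq_zero _
  have e5 : s 5 = s 3 := by rw [← a5, b3, a2, a1, e1, zero_add]
  have e3 : s 3 = 0 := by
    have h : s 3 = s 3 + s 3 := by nth_rewrite 1 [← a3]; rw [← a6, b5, a3, e5]
    simpa using h
  intro j hj
  interval_cases j
  · rw [t0]; rfl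
  · rw [e1]; rfl
  · rw [a1, e1]; rfl
  · rw [e3]; rfl
  · rw [a2, a1, e1]; rfl
  · rw [e5, e3]; rfl
  · rw [a3, e3]; rfl

lemma init9 (s : ℕ → ZMod 2) (hrec : ∀ j, s (j + 9) = s (j + 4) + s j)
    (hsq : ∀ j, s (2 * j) = s j) (t0 : s 0 = 1) :
    ∀ j < 9, s j = (sBit traceBits9 j : ZMod 2) := by
  have a1 : s 2 = s 1 := hsq 1
  have a2 : s 4 = s 2 := hsq 2
  have a3 : s 6 = s 3 := hsq 3
  have a4 : s 8 = s 4 := hsq 4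
  have a5 : s 10 = s 5 := hsq 5
  have a6 : s 12 = s 6 := hsq 6
  have a7 : s 14 = s 7 := hsq 7
  have a8 : s 16 = s 8 := hsq 8
  have b0 : s 9 = s 4 + s 0 := hrec 0
  have b1 : s 10 = s 5 + s 1 := hrec 1
  have b2 : s 11 = s 6 + s 2 := hrec 2
  have b3 : s 12 = s 7 + s 3 := hrec 3
  have b5 : s 14 = s 9 + s 5 := hrec 5
  have b7 : s 16 = s 11 + s 7 := hrec 7
  have e1 : s 1 = 0 := by
    have h : s 5 = s 5 + s 1 := by rw [← b1, a5]
    simpa using h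
  have e2 : s 2 = 0 := by rw [a1, e1]
  have e4 : s 4 = 0 := by rw [a2, e2]
  have e8 : s 8 = 0 := by rw [a4, e4]
  have e7 : s 7 = 0 := by
    have h : s 3 = s 7 + s 3 := by rw [← b3, a6, a3]
    simpa using h
  have e5 : s 5 = 1 := by
    have h : 1 + s 5 = 0 := by rw [← e7, ← a7, b5, b0, e4, t0, zero_add]
    exact (CharTwo.add_eq_zero.1 h).symm
  have e3 : s 3 = 0 := by
    have h : s 3 + 0 + 0 = 0 := by
      nth_rewrite 1 [← e2]; nth_rewrite 1 [← e7]; rw [← a3, ← b2, ← b7, a8, e8]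
    simpa using h
  intro j hj
  interval_cases j
  · rw [t0]; rfl
  · rw [e1]; rfl
  · rw [e2]; rfl
  · rw [e3]; rfl
  · rw [e4]; rfl
  · rw [e5]; rfl
  · rw [a3, e3]; rfl
  · rw [e7]; rfl
  · rw [e8]; rfl

lemma good7 (κ : Fq 7) (hκ : κ ≠ 0) : 17 ≤ (goodSet κ).card := by
  have h2 := fq_two (n := 7)
  obtain ⟨g, hg⟩ := exists_root_of_dvd (n := 7) (by norm_num) _ (by
    have : (Polynomial.X ^ 7 + Polynomial.X + 1 : Polynomial (ZMod 2)).degree = 7 := by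
      compute_degree!
    rw [this]; norm_num) dvd7
  simp only [map_add, map_pow, Polynomial.aeval_X, map_one] at hg
  have hr : g ^ 7 = g ^ 1 + 1 := by linear_combination hg - (g + 1) * h2
  have hg0 : g ≠ 0 := by rintro rfl; simp at hr
  have t1 : tr (1 : Fq 7) = 1 := tr_one (by norm_num) (by decide)
  have hini := init7 (fun j => tr (g ^ j))
    (by intro j; rw [← tr_add, pow_add, hr]; congr 1; ring)
    (by intro j; rw [mul_comm, pow_mul, tr_sq])
    (by simpa using t1)
  have htab := table_spec traceBits7 127 1 (by norm_num) g hr hini (by decide +kernel)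
  refine small_case (by norm_num) traceBits7 127 17 (by norm_num) (by norm_num) g ?_ htab sAll7 κ hκ
  have hQ : g ^ 127 = 1 := by
    have := FiniteField.pow_card_sub_one_eq_one g hg0
    rwa [fq_fcard (by norm_num)] at this
  have : Fact (Nat.Prime 127) := ⟨by norm_num⟩
  refine orderOf_eq_prime hQ ?_
  rintro rfl
  have h := htab 1 (by norm_num)
  rw [one_pow, t1] at h
  exact absurd h (by decide +kernel)

lemma good9 (κ : Fq 9) (hκ : κ ≠ 0) : 53 ≤ (goodSet κ).card := by
  have h2 := fq_two (n := 9)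
  obtain ⟨g, hg⟩ := exists_root_of_dvd (n := 9) (by norm_num) _ (by
    have : (Polynomial.X ^ 9 + Polynomial.X ^ 4 + 1 : Polynomial (ZMod 2)).degree = 9 := by
      compute_degree!
    rw [this]; norm_num) dvd9
  simp only [map_add, map_pow, Polynomial.aeval_X, map_one] at hg
  have hr : g ^ 9 = g ^ 4 + 1 := by linear_combination hg - (g ^ 4 + 1) * h2
  have hg0 : g ≠ 0 := by rintro rfl; simp at hr
  have t1 : tr (1 : Fq 9) = 1 := tr_one (by norm_num) (by decide)
  have hini := init9 (fun j => tr (g ^ j))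
    (by intro j; rw [← tr_add, pow_add, hr]; congr 1; ring)
    (by intro j; rw [mul_comm, pow_mul, tr_sq])
    (by simpa using t1)
  have htab := table_spec traceBits9 511 4 (by norm_num) g hr hini (by decide +kernel)
  refine small_case (by norm_num) traceBits9 511 53 (by norm_num) (by norm_num) g ?_ htab sAll9 κ hκ
  have hQ : g ^ 511 = 1 := by
    have := FiniteField.pow_card_sub_one_eq_one g hg0
    rwa [fq_fcard (by norm_num)] at this
  apply orderOf_eq_of_pow_and_pow_div_prime (by norm_num) hQ
  intro p hp hd hone
  have hd' : p ∣ 7 * 73 := by simpa using hd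
  rcases (Nat.Prime.dvd_mul hp).1 hd' with h | h
  · rw [(Nat.prime_dvd_prime_iff_eq hp (by norm_num)).1 h] at hone
    norm_num only at hone
    have h := htab (73 + 0) (by norm_num)
    rw [pow_add, hone, one_mul, htab 0 (by norm_num)] at h
    exact absurd h (by decide +kernel)
  · rw [(Nat.prime_dvd_prime_iff_eq hp (by norm_num)).1 h] at hone
    norm_num only at hone
    have h := htab 7 (by norm_num)
    rw [hone, t1] at h
    exact absurd h (by decide +kernel)

end Small

/-- Odd `n ≥ 7`: many `b` give a small linear kernel for the second derivative
of `tr(x^15)`. -/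
theorem count_b_small_linKer (n : ℕ) (hn : 7 ≤ n) (hodd : Odd n)
    (f : Fq n → ZMod 2) (hf : ∀ x, f x = tr (x ^ 15))
    (a : Fq n) (ha : a ≠ 0) :
    ({b : Fq n | b ≠ 0 ∧ b ≠ 1 ∧
        (linKer (der (der f a) (a * b))).ncard ≤ 8}.ncard : ℝ)
      ≥ 3 * (2:ℝ) ^ ((n:ℝ) - 4) + 10 := by
  have hn0 : n ≠ 0 := by omega
  have h1 := count_ge hn0 hodd f hf a ha
  have hκ : (a ^ 5)⁻¹ ≠ 0 := inv_ne_zero (pow_ne_zero _ ha)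
  have h2 : 3 * 2 ^ (n - 5) + 5 ≤ (goodSet ((a ^ 5)⁻¹)).card := by
    by_cases h11 : 11 ≤ n
    · exact good_large h11 hodd _ hκ
    · have h79 : n = 7 ∨ n = 9 := by
        obtain ⟨r, rfl⟩ := hodd
        omega
      rcases h79 with rfl | rfl
      · exact good7 _ hκ
      · exact good9 _ hκ
  have h3 : 3 * 2 ^ (n - 4) + 10 ≤ {b : Fq n | b ≠ 0 ∧ b ≠ 1 ∧
        (linKer (der (der f a) (a * b))).ncard ≤ 8}.ncard := by
    have e : n - 4 = (n - 5) + 1 := by omega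
    rw [e, pow_succ]
    omega
  have e4 : (n : ℝ) - 4 = ((n - 4 : ℕ) : ℝ) := by
    rw [Nat.cast_sub (by omega)]; norm_num
  rw [e4, Real.rpow_natCast, ge_iff_le]
  exact_mod_cast h3
end
end

section
/- Let n ≥ 6 be an integer, and define the real sequence (l_k)_{k ≥ 3} by l_3 = (1/2)·√((2^n − 1)·√(2^{3n/2 + 3} + 3·2^{n+1} − 2^{n/2 + 3} + 16) + 2^n) and l_{k+1} = √((2^n − 1)·(l_k + 1) + 2^{n−2}) for k ≥ 3. Then for every integer r with 3 ≤ r ≤ n − 3, one has l_r ≤ 2^{(1 − 2^{−r})·n − 2^{−(r−1)}} + 3·2^{(1/2 − 2^{−r})·n}. -/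
lemma base_alg (x c S : ℝ) (hx : 1 ≤ x) (hx8 : 64 ≤ x ^ 8) (hc : 3 / 4 ≤ c) (hc4 : c ^ 4 = 1 / 2)
    (hS : S = Real.sqrt (8 * x ^ 12 + 6 * x ^ 8 - 8 * x ^ 4 + 16)) :
    (1 / 2) * Real.sqrt ((x ^ 8 - 1) * S + x ^ 8) ≤ c * x ^ 7 + 3 * x ^ 3 := by
  have hx0 : 0 < x := by linarith
  have h4 : 1 ≤ x ^ 4 := one_le_pow₀ hx
  have h4' : 8 ≤ x ^ 4 := by nlinarith [h4]
  have hcc : 9 / 16 ≤ c ^ 2 := by nlinarith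
  have hS1 : S ≤ 4 * c ^ 2 * x ^ 6 + 2 * x ^ 2 := by
    rw [hS]
    apply Real.sqrt_le_iff.mpr
    refine ⟨by positivity, ?_⟩
    have e : (4 * c ^ 2 * x ^ 6 + 2 * x ^ 2) ^ 2 = 16 * c ^ 4 * x ^ 12 + 16 * c ^ 2 * x ^ 8 + 4 * x ^ 4 := by ring
    rw [e, hc4]
    have := mul_le_mul_of_nonneg_right hcc (by positivity : 0 ≤ x ^ 8)
    nlinarith
  have hS0 : 0 ≤ S := by rw [hS]; positivity
  have h2 : Real.sqrt ((x ^ 8 - 1) * S + x ^ 8) ≤ 2 * (c * x ^ 7 + 3 * x ^ 3) := by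
    apply Real.sqrt_le_iff.mpr
    refine ⟨by positivity, ?_⟩
    have e : (2 * (c * x ^ 7 + 3 * x ^ 3)) ^ 2 = 4 * c ^ 2 * x ^ 14 + 24 * (c * x ^ 10) + 36 * x ^ 6 := by ring
    rw [e]
    have a1 := mul_le_mul_of_nonneg_left hS1 (by positivity : 0 ≤ x ^ 8)
    have a2 := mul_le_mul_of_nonneg_right hc (by positivity : 0 ≤ x ^ 10)
    have a3 : x ^ 8 ≤ x ^ 10 := pow_le_pow_right₀ hx (by norm_num)
    have a4 : 0 ≤ x ^ 6 := by positivity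
    have a5 : x ^ 8 * (4 * c ^ 2 * x ^ 6 + 2 * x ^ 2) = 4 * c ^ 2 * x ^ 14 + 2 * x ^ 10 := by ring
    nlinarith
  linarith

lemma step_alg (N A B A' B' d L Q : ℝ) (hN : 1 ≤ N) (hA' : 0 ≤ A') (hB' : 0 ≤ B')
    (hA : 0 ≤ A) (hB : 1 ≤ B) (hd : 3 / 4 ≤ d) (h1 : A' ^ 2 = N * A) (h2 : A' * B' = N * B * d)
    (hL : L ≤ A + 3 * B) (hQ : Q = N / 4) :
    Real.sqrt ((N - 1) * (L + 1) + Q) ≤ A' + 3 * B' := by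
  apply Real.sqrt_le_iff.mpr
  refine ⟨by positivity, ?_⟩
  have e : (A' + 3 * B') ^ 2 = N * A + 6 * (N * B * d) + 9 * B' ^ 2 := by
    rw [← h1, ← h2]; ring
  rw [e, hQ]
  have b1 : (N - 1) * (L + 1) ≤ (N - 1) * (A + 3 * B + 1) :=
    mul_le_mul_of_nonneg_left (by linarith) (by linarith)
  have b2 : N * B * (3 / 4) ≤ N * B * d := mul_le_mul_of_nonneg_left hd (by positivity)
  have b3 : N * 1 ≤ N * B := mul_le_mul_of_nonneg_left hB (by positivity)
  nlinarith [sq_nonneg B']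

lemma two_rpow_lb (t : ℝ) (ht : -(1 / 4) ≤ t) : 3 / 4 ≤ (2 : ℝ) ^ t := by
  have h : (2 : ℝ) ^ (-(1 / 4) : ℝ) ≤ (2 : ℝ) ^ t :=
    Real.rpow_le_rpow_of_exponent_le (by norm_num) ht
  refine le_trans ?_ h
  have h4 : ((2 : ℝ) ^ (-(1 / 4) : ℝ)) ^ 4 = 1 / 2 := by
    rw [← Real.rpow_natCast, ← Real.rpow_mul (by norm_num)]
    norm_num
  refine le_of_pow_le_pow_left₀ (n := 4) (by norm_num) (by positivity) ?_
  rw [h4]; norm_num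

/-- Upper bound on the recursively defined sequence `l_r` arising from
Carlet's bound for the inverse function. -/
theorem l_seq_upper_bound (n : ℕ) (hn : 6 ≤ n) (l : ℕ → ℝ)
    (h3 : l 3 = (1/2) * Real.sqrt (((2:ℝ) ^ (n:ℝ) - 1) * Real.sqrt
      ((2:ℝ) ^ (3 * (n:ℝ) / 2 + 3) + 3 * (2:ℝ) ^ ((n:ℝ) + 1)
        - (2:ℝ) ^ ((n:ℝ) / 2 + 3) + 16) + (2:ℝ) ^ (n:ℝ)))
    (hrec : ∀ k : ℕ, 3 ≤ k →
      l (k + 1) = Real.sqrt (((2:ℝ) ^ (n:ℝ) - 1) * (l k + 1) + (2:ℝ) ^ ((n:ℝ) - 2)))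
    (r : ℕ) (hr : 3 ≤ r) (hrn : r + 3 ≤ n) :
    l r ≤ (2:ℝ) ^ ((1 - (2:ℝ) ^ (-(r:ℝ))) * (n:ℝ) - (2:ℝ) ^ (-((r:ℝ) - 1)))
      + 3 * (2:ℝ) ^ ((1/2 - (2:ℝ) ^ (-(r:ℝ))) * (n:ℝ)) := by
  clear hrn
  have hn' : (6 : ℝ) ≤ n := by exact_mod_cast hn
  have two : (0 : ℝ) < 2 := by norm_num
  induction r, hr using Nat.le_induction with
  | base =>
    have hp : ∀ k : ℕ, ((2:ℝ) ^ ((n:ℝ) / 8)) ^ k = (2:ℝ) ^ ((n:ℝ) / 8 * k) := by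
      intro k
      rw [Real.rpow_mul two.le, Real.rpow_natCast]
    have e8 : (2:ℝ) ^ (n:ℝ) = ((2:ℝ) ^ ((n:ℝ) / 8)) ^ 8 := by
      rw [hp]; congr 1; push_cast; ring
    have c3 : (2:ℝ) ^ (3:ℝ) = 8 := by norm_num
    have e12 : (2:ℝ) ^ (3 * (n:ℝ) / 2 + 3) = 8 * ((2:ℝ) ^ ((n:ℝ) / 8)) ^ 12 := by
      rw [hp, Real.rpow_add two, c3, mul_comm]; congr 2; push_cast; ring
    have e4 : (2:ℝ) ^ ((n:ℝ) / 2 + 3) = 8 * ((2:ℝ) ^ ((n:ℝ) / 8)) ^ 4 := by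
      rw [hp, Real.rpow_add two, c3, mul_comm]; congr 2; push_cast; ring
    have e81 : 3 * (2:ℝ) ^ ((n:ℝ) + 1) = 6 * ((2:ℝ) ^ ((n:ℝ) / 8)) ^ 8 := by
      rw [Real.rpow_add two, Real.rpow_one, e8]; ring
    have t3 : (2:ℝ) ^ (-((3:ℕ):ℝ)) = 1 / 8 := by
      rw [Real.rpow_neg two.le, Real.rpow_natCast]; norm_num
    have t2 : (2:ℝ) ^ (-(((3:ℕ):ℝ) - 1)) = 1 / 4 := by
      rw [Real.rpow_neg two.le, show (((3:ℕ):ℝ) - 1) = ((2:ℕ):ℝ) by norm_num, Real.rpow_natCast]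
      norm_num
    have eA : (2:ℝ) ^ ((1 - (1:ℝ) / 8) * (n:ℝ) - 1 / 4)
        = (2:ℝ) ^ (-(1 / 4) : ℝ) * ((2:ℝ) ^ ((n:ℝ) / 8)) ^ 7 := by
      rw [hp, ← Real.rpow_add two]; congr 1; push_cast; ring
    have eB : (2:ℝ) ^ ((1 / 2 - (1:ℝ) / 8) * (n:ℝ)) = ((2:ℝ) ^ ((n:ℝ) / 8)) ^ 3 := by
      rw [hp]; congr 1; push_cast; ring
    rw [h3, t3, t2, eA, eB, e12, e4, e81, e8]
    refine base_alg _ _ _ (Real.one_le_rpow (by norm_num) (by positivity)) ?_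
      (two_rpow_lb _ le_rfl) ?_ rfl
    · rw [← e8, Real.rpow_natCast]
      calc (64 : ℝ) = 2 ^ 6 := by norm_num
        _ ≤ 2 ^ n := pow_le_pow_right₀ (by norm_num) hn
    · rw [← Real.rpow_natCast, ← Real.rpow_mul two.le]
      norm_num
  | succ k hk ih =>
    rw [hrec k hk]
    have s0 : (2:ℝ) ^ (-(k:ℝ)) ≤ 1 / 8 := by
      rw [Real.rpow_neg two.le, Real.rpow_natCast]
      have : (2:ℝ) ^ 3 ≤ 2 ^ k := pow_le_pow_right₀ (by norm_num) hk
      rw [one_div]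
      exact inv_anti₀ (by norm_num) (by linarith)
    have sm : (2:ℝ) ^ (-((k:ℝ) - 1)) = 2 * (2:ℝ) ^ (-(k:ℝ)) := by
      rw [show -((k:ℝ) - 1) = 1 + -(k:ℝ) by ring, Real.rpow_add two, Real.rpow_one]
    have sp : (2:ℝ) ^ (-((k + 1 : ℕ):ℝ)) = (2:ℝ) ^ (-(k:ℝ)) / 2 := by
      rw [show -((k + 1 : ℕ):ℝ) = -(k:ℝ) - 1 by push_cast; ring, Real.rpow_sub two, Real.rpow_one]
    have sq : (2:ℝ) ^ (-(((k + 1 : ℕ):ℝ) - 1)) = (2:ℝ) ^ (-(k:ℝ)) := by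
      congr 1; push_cast; ring
    rw [sm] at ih
    rw [sp, sq]
    generalize (2:ℝ) ^ (-(k:ℝ)) = s at *
    refine step_alg _ _ _ _ _ ((2:ℝ) ^ (-s)) _ _ (Real.one_le_rpow (by norm_num) (by positivity))
      (by positivity) (by positivity) (by positivity)
      (Real.one_le_rpow (by norm_num) (by nlinarith)) (two_rpow_lb _ (by linarith)) ?_ ?_ ih ?_
    · rw [← Real.rpow_natCast, ← Real.rpow_mul two.le, ← Real.rpow_add two]
      congr 1; push_cast; ring
    · rw [← Real.rpow_add two, ← Real.rpow_add two, ← Real.rpow_add two]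
      congr 1; ring
    · rw [Real.rpow_sub two]; norm_num
end
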